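/- arXiv:1011.5687 — 2 statements merged into one kernel-verified Lean document; each statement's English description precedes it below -/
import Mathlib

section
/- Let X be a nonempty zero-dimensional dense-in-itself metric space and let F = (W, R, R_D) be a finite S4D-frame such that W = R(w₀) for some point w₀ (F is rooted at w₀ with W equal to the set of R-successors of w₀) and R_D = W × W. Then there exists a cd-p-morphism from X onto F. -/
/-- Bimodal formulas: propositional letters, falsum, implication, box, and
the difference modality `[≠]` (called `dbox` here). -/
inductive BForm : Type
  | var : ℕ → BForm
  | bot : BForm
  | imp : BForm → BForm → BForm
  | box : BForm → BForm
  | dbox : BForm → BForm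
  deriving DecidableEq

namespace BForm

/-- Classical negation. -/
def neg (A : BForm) : BForm := imp A bot

/-- Classical conjunction. -/
def conj (A B : BForm) : BForm := neg (imp A (neg B))

/-- `◇A = ¬□¬A`. -/
def dia (A : BForm) : BForm := neg (box (neg A))

/-- `⟨≠⟩A = ¬[≠]¬A`. -/
def ddia (A : BForm) : BForm := neg (dbox (neg A))

end BForm

/-- Truth at a point of a Kripke model over a frame `(W, R, R_D)`. -/
def ksat {W : Type} (R RD : W → W → Prop) (θ : ℕ → Set W) : W → BForm → Prop
  | x, .var n => x ∈ θ n
  | _, .bot => False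
  | x, .imp A B => ksat R RD θ x A → ksat R RD θ x B
  | x, .box A => ∀ y, R x y → ksat R RD θ y A
  | x, .dbox A => ∀ y, RD x y → ksat R RD θ y A

/-- Validity in a Kripke frame: truth at every point under every valuation. -/
def kvalid {W : Type} (R RD : W → W → Prop) (A : BForm) : Prop :=
  ∀ (θ : ℕ → Set W) (x : W), ksat R RD θ x A

/-- Truth at a point of a topological model. -/
def tsat {X : Type} [TopologicalSpace X] (θ : ℕ → Set X) : X → BForm → Prop
  | x, .var n => x ∈ θ n
  | _, .bot => False
  | x, .imp A B => tsat θ x A → tsat θ x B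
  | x, .box A => ∃ U : Set X, IsOpen U ∧ x ∈ U ∧ ∀ y ∈ U, tsat θ y A
  | x, .dbox A => ∀ y, y ≠ x → tsat θ y A

/-- Validity in a topological space. -/
def tvalid (X : Type) [TopologicalSpace X] (A : BForm) : Prop :=
  ∀ (θ : ℕ → Set X) (x : X), tsat θ x A

/-- Uniform substitution of formulas for propositional letters. -/
def substF (σ : ℕ → BForm) : BForm → BForm
  | .var n => σ n
  | .bot => .bot
  | .imp A B => .imp (substF σ A) (substF σ B)
  | .box A => .box (substF σ A)
  | .dbox A => .dbox (substF σ A)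

/-- Boolean evaluation of a formula, treating letters and modal formulas as atoms. -/
def beval (v : BForm → Bool) : BForm → Bool
  | .var n => v (.var n)
  | .bot => false
  | .imp A B => !(beval v A) || beval v B
  | .box A => v (.box A)
  | .dbox A => v (.dbox A)

/-- A classical tautology of the bimodal language. -/
def Tautology (A : BForm) : Prop := ∀ v : BForm → Bool, beval v A = true

/-- The letter `p`. -/
def pLet : BForm := .var 0
/-- The letter `q`. -/
def qLet : BForm := .var 1

/-- The least bimodal logic containing `K₂`, the S4D axioms and the extra axioms `Ax`,
closed under modus ponens, uniform substitution, and both necessitation rules. -/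
inductive Logic (Ax : Set BForm) : BForm → Prop
  | taut {A : BForm} : Tautology A → Logic Ax A
  | axKBox : Logic Ax (.imp (.box (.imp pLet qLet)) (.imp (.box pLet) (.box qLet)))
  | axKD : Logic Ax (.imp (.dbox (.imp pLet qLet)) (.imp (.dbox pLet) (.dbox qLet)))
  | axBD : Logic Ax (.imp pLet (.dbox (BForm.ddia pLet)))
  | ax4mD : Logic Ax (.imp (BForm.conj pLet (.dbox pLet)) (.dbox (.dbox pLet)))
  | axTBox : Logic Ax (.imp (.box pLet) pLet)
  | ax4Box : Logic Ax (.imp (.box pLet) (.box (.box pLet)))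
  | axDBox : Logic Ax (.imp (BForm.conj (.dbox pLet) pLet) (.box pLet))
  | extra {A : BForm} : A ∈ Ax → Logic Ax A
  | mp {A B : BForm} : Logic Ax (.imp A B) → Logic Ax A → Logic Ax B
  | subst {A : BForm} (σ : ℕ → BForm) : Logic Ax A → Logic Ax (substF σ A)
  | necBox {A : BForm} : Logic Ax A → Logic Ax (.box A)
  | necD {A : BForm} : Logic Ax A → Logic Ax (.dbox A)

/-- The axiom (DS): `[≠]p → ◇p`. -/
def dsAx : BForm := .imp (.dbox pLet) (BForm.dia pLet)

/-- The axiom (AT₁): `[≠]p → [≠]□p`. -/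
def at1Ax : BForm := .imp (.dbox pLet) (.dbox (.box pLet))

/-- The logic S4D. -/
def S4D : BForm → Prop := Logic ∅

/-- The logic S4DS = S4D + (DS). -/
def S4DS : BForm → Prop := Logic {dsAx}

/-- The logic S4DT1S = S4DS + (AT₁). -/
def S4DT1S : BForm → Prop := Logic {dsAx, at1Ax}

/-- `(W, R, R_D)` is an S4D-frame: `R` is reflexive and transitive, `R_D` is
symmetric and pseudo-transitive, and `R ⊆ R_D ∪ Id`. -/
structure IsS4DFrame {W : Type} (R RD : W → W → Prop) : Prop where
  refl : ∀ x, R x x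
  trans : ∀ ⦃x y z⦄, R x y → R y z → R x z
  symm : ∀ ⦃x y⦄, RD x y → RD y x
  ptrans : ∀ ⦃x y z⦄, RD x y → RD y z → x ≠ z → RD x z
  inc : ∀ ⦃x y⦄, R x y → RD x y ∨ x = y

/-- A T₁-frame: every `R_D`-irreflexive point is `R`-minimal. -/
def IsT1Frame {W : Type} (R RD : W → W → Prop) : Prop :=
  ∀ x, ¬ RD x x → ∀ y, R y x → y = x

/-- A DS-frame: every `R_D`-irreflexive point has an `R`-successor distinct from itself. -/
def IsDSFrame {W : Type} (R RD : W → W → Prop) : Prop :=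
  ∀ x, ¬ RD x x → ∃ y, y ≠ x ∧ R x y

/-- A cd-p-morphism from a topological space `X` onto a Kripke frame `(W, R, R_D)`. -/
structure IsCdPMorphism {X : Type} [TopologicalSpace X] {W : Type}
    (R RD : W → W → Prop) (f : X → W) : Prop where
  surj : Function.Surjective f
  cl : ∀ w : W, closure (f ⁻¹' {w}) = f ⁻¹' {v | R v w}
  diff : ∀ w : W, {x : X | ∃ y, y ≠ x ∧ f y = w} = f ⁻¹' {v | RD v w}

/-- A p-morphism between Kripke frames. -/
structure IsPMorphism {W W' : Type} (R RD : W → W → Prop) (R' RD' : W' → W' → Prop)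
    (f : W → W') : Prop where
  surj : Function.Surjective f
  forth : ∀ ⦃x y⦄, R x y → R' (f x) (f y)
  forthD : ∀ ⦃x y⦄, RD x y → RD' (f x) (f y)
  back : ∀ x z, R' (f x) z → ∃ y, R x y ∧ f y = z
  backD : ∀ x z, RD' (f x) z → ∃ y, RD x y ∧ f y = z

/-- The Alexandrov topology on `W` whose open sets are the `R`-upward-closed sets. -/
def alexandrov {W : Type} (R : W → W → Prop) : TopologicalSpace W where
  IsOpen U := ∀ ⦃x⦄, x ∈ U → ∀ ⦃y⦄, R x y → y ∈ U
  isOpen_univ := fun _ _ _ _ => trivial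
  isOpen_inter := fun _ _ hU hV x hx y hxy => ⟨hU hx.1 hxy, hV hx.2 hxy⟩
  isOpen_sUnion := fun _ hS x hx y hxy => by
    obtain ⟨U, hU, hxU⟩ := hx
    exact ⟨U, hU, hS U hU hxU hxy⟩

/-!
With `W` carrying the preorder `R`, the morphism is a map `f : X → W` with infinite fibres and
`closure (f ⁻¹' {w}) = f ⁻¹' Iic w`. It is the limit of labellings of `X` which increase pointwise.
At every stage the labels of some points are final (these points are *settled*), and off the settled
points the labelling is locally constant. To pass to the next stage, consider the open set of
unsettled points with label `w` and settle a discrete dense-enough subset `D` of it. Around each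
`d ∈ D` choose a small clopen set, cut it into clopen annuli shrinking to `d`, and relabel the
annuli by elements `v ≥ w` so that each such `v` is used infinitely often.

Near a point settled with value `w` there are unsettled points with any prescribed label `v ≥ w`,
and the next stage settles points with that label nearby. The distance to them has to be
small relative to the distance to the points settled so far, which is why the density of `D` is
governed by a Lipschitz function vanishing off the open set rather than by a constant. Points that
are never settled get a value by the ascending chain condition and are limits of points settled
with values below it.
-/

open Filter Metric Set Topology

section PuncturedNeighbourhoods

variable {X : Type*} [TopologicalSpace X] [T1Space X] [FirstCountableTopology X]

theorem exists_antitone_isClopen_basis_nonempty_diff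
    (hzero : TopologicalSpace.IsTopologicalBasis {s : Set X | IsClopen s}) (d : X)
    [(𝓝[≠] d).NeBot] :
    ∃ V : ℕ → Set X, (∀ n, IsClopen (V n)) ∧ (𝓝 d).HasAntitoneBasis V ∧
      ∀ n, (V n \ V (n + 1)).Nonempty := by
  obtain ⟨V, hV, hbasis⟩ := hzero.nhds_hasBasis (a := d).exists_antitone_subbasis
  have hdiff : ∀ m, ∀ᶠ n in atTop, (V m \ V n).Nonempty := by
    intro m
    obtain ⟨y, hy, hyd⟩ := (infinite_of_mem_nhds d (hbasis.mem m)).exists_notMem_finite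
      (finite_singleton d)
    obtain ⟨n, hn⟩ := hbasis.mem_iff.mp (isOpen_compl_singleton.mem_nhds (Ne.symm hyd))
    filter_upwards [eventually_ge_atTop n] with k hk
    exact ⟨y, hy, fun hyk => hn (hbasis.antitone hk hyk) rfl⟩
  obtain ⟨φ, -, hφdiff, hφbasis⟩ := hbasis.subbasis_with_rel hdiff
  exact ⟨V ∘ φ, fun n => (hV (φ n)).1, hφbasis, fun n => hφdiff n.lt_succ_self⟩

theorem exists_nat_eventually_eq_of_ne_and_eventually_exists_eq
    (hzero : TopologicalSpace.IsTopologicalBasis {s : Set X | IsClopen s}) (d : X)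
    [(𝓝[≠] d).NeBot] :
    ∃ ρ : X → ℕ, (∀ x ≠ d, ∀ᶠ y in 𝓝 x, ρ y = ρ x) ∧
      ∀ U ∈ 𝓝 d, ∀ᶠ n in atTop, ∃ z ∈ U, z ≠ d ∧ ρ z = n := by
  obtain ⟨V, hV, hbasis, hdiff⟩ := exists_antitone_isClopen_basis_nonempty_diff hzero d
  refine ⟨fun x => sInf {n | x ∉ V n}, fun x hx => ?_, fun U hU => ?_⟩
  · obtain ⟨n, hn⟩ := hbasis.mem_iff.mp (isOpen_compl_singleton.mem_nhds (Ne.symm hx))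
    have hxV : sInf {n | x ∉ V n} ∈ {n | x ∉ V n} := Nat.sInf_mem ⟨n, fun h => hn h rfl⟩
    have hmem : ∀ᶠ y in 𝓝 x, ∀ m < sInf {n | x ∉ V n}, y ∈ V m :=
      (eventually_all_finite (finite_lt_nat _)).mpr fun m hm =>
        (hV m).isOpen.eventually_mem (not_not.mp (Nat.notMem_of_lt_sInf hm))
    filter_upwards [hmem, (hV _).compl.isOpen.eventually_mem hxV] with y hy hyV
    exact le_antisymm (Nat.sInf_le hyV)
      (not_lt.mp fun hlt => Nat.sInf_mem (s := {n | y ∉ V n}) ⟨_, hyV⟩ (hy _ hlt))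
  · obtain ⟨N, hN⟩ := hbasis.mem_iff.mp hU
    filter_upwards [eventually_gt_atTop N] with n hn
    obtain ⟨k, rfl⟩ := Nat.exists_eq_succ_of_ne_zero (Nat.ne_zero_of_lt hn)
    obtain ⟨z, hzV, hzV'⟩ := hdiff k
    refine ⟨z, hN (hbasis.antitone (Nat.le_of_lt_succ hn) hzV), ?_, ?_⟩
    · rintro rfl
      exact hzV' (mem_of_mem_nhds (hbasis.mem (k + 1)))
    · refine le_antisymm (Nat.sInf_le hzV') (Nat.succ_le_of_lt (not_le.mp fun hle => ?_))
      exact Nat.sInf_mem (s := {n | z ∉ V n}) ⟨_, hzV'⟩ (hbasis.antitone hle hzV)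

theorem exists_eventually_eq_of_ne_and_frequently_eq
    (hzero : TopologicalSpace.IsTopologicalBasis {s : Set X | IsClopen s}) (d : X)
    [(𝓝[≠] d).NeBot] {ι : Type*} [Countable ι] (i₀ : ι) :
    ∃ φ : X → ι, φ d = i₀ ∧ (∀ x ≠ d, ∀ᶠ y in 𝓝 x, φ y = φ x) ∧
      ∀ i, ∃ᶠ z in 𝓝[≠] d, φ z = i := by
  classical
  obtain ⟨ρ, hρ, hρd⟩ := exists_nat_eventually_eq_of_ne_and_eventually_exists_eq hzero d
  have : Nonempty ι := ⟨i₀⟩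
  obtain ⟨e, he⟩ := exists_surjective_nat ι
  -- Through `Nat.unpair`, every index is repeated infinitely often.
  refine ⟨Function.update (fun x => e (ρ x).unpair.1) d i₀, Function.update_self .., ?_, ?_⟩
  · intro x hx
    filter_upwards [hρ x hx, eventually_ne_nhds hx] with y hy hyd
    rw [Function.update_of_ne hyd, Function.update_of_ne hx, hy]
  · intro i
    obtain ⟨a, rfl⟩ := he i
    refine frequently_nhdsWithin_iff.mpr (frequently_iff.mpr fun {U} hU => ?_)
    obtain ⟨N, hN⟩ := eventually_atTop.mp (hρd U hU)
    obtain ⟨z, hzU, hzd, hz⟩ := hN (Nat.pair a N) (Nat.right_le_pair a N)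
    refine ⟨z, hzU, ?_, hzd⟩
    rw [Function.update_of_ne hzd, hz, Nat.unpair_pair]

end PuncturedNeighbourhoods

section SeparatedNets

variable {X : Type*} [PseudoMetricSpace X]

theorem exists_lipschitzWith_one_le_pos_iff_mem {U : Set X} (hU : IsOpen U) {ε : ℝ} (hε : 0 < ε) :
    ∃ r : X → ℝ, LipschitzWith 1 r ∧ (∀ x, r x ≤ ε) ∧ (∀ x, 0 < r x ↔ x ∈ U) ∧
      ∀ x, ∀ y ∉ U, r x ≤ dist x y := by
  rcases Uᶜ.eq_empty_or_nonempty with hempty | hne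
  · rw [compl_empty_iff] at hempty
    subst hempty
    exact ⟨fun _ => ε, LipschitzWith.const' ε, fun _ => le_rfl,
      fun x => iff_of_true hε (mem_univ x), fun _ y hy => absurd (mem_univ y) hy⟩
  · refine ⟨fun x => min ε (infDist x Uᶜ), (lipschitz_infDist_pt _).const_min ε,
      fun x => min_le_left .., fun x => ?_, fun x y hy => (min_le_right ..).trans
        (infDist_le_dist_of_mem hy)⟩
    rw [lt_min_iff, ← hU.isClosed_compl.notMem_iff_infDist_pos hne, notMem_compl_iff]
    exact and_iff_right hε

theorem exists_separated_net_of_lipschitzWith_one {r : X → ℝ} (hr : LipschitzWith 1 r) {ε : ℝ}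
    (hrε : ∀ x, r x ≤ ε) :
    ∃ D : Set X, (∀ d ∈ D, 0 < r d) ∧ D.Pairwise (fun d e => r d ≤ 20 * dist d e) ∧
      ∀ x, 0 < r x → ∃ d ∈ D, dist x d < r x := by
  obtain ⟨D, hD, hdisj, hcover⟩ := Vitali.exists_disjoint_subfamily_covering_enlargement_closedBall
    {x | 0 < r x} id (fun x => r x / 20) (ε / 20) (fun x _ => by linarith [hrε x]) 5 (by norm_num)
  refine ⟨D, hD, fun d hd e he hde => ?_, fun x hx => ?_⟩
  · have he_notMem : e ∉ closedBall d (r d / 20) := fun h =>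
      disjoint_left.mp (hdisj hd he hde) h (mem_closedBall_self (div_pos (hD he) (by norm_num)).le)
    rw [mem_closedBall, not_le, dist_comm] at he_notMem
    linarith
  · obtain ⟨d, hd, hsub⟩ := hcover x hx
    have hxd : dist x d ≤ 5 * (r d / 20) :=
      mem_closedBall.mp (hsub (mem_closedBall_self (by linarith)))
    have hrd := hr.le_add_mul d x
    rw [NNReal.coe_one, one_mul, dist_comm] at hrd
    exact ⟨d, hd, by linarith⟩

theorem eq_of_separated_of_dist_lt {r : X → ℝ} {D : Set X} (hD : ∀ d ∈ D, 0 < r d)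
    (hsep : D.Pairwise fun d e => r d ≤ 20 * dist d e) {d e a b : X} (hd : d ∈ D) (he : e ∈ D)
    (ha : a ∈ ball d (r d / 80)) (hb : b ∈ ball e (r e / 80)) (hab : dist a b < r d / 80) :
    d = e := by
  by_contra hde
  have hsep_de : r d ≤ 20 * dist d e := hsep hd he hde
  have hsep_ed : r e ≤ 20 * dist e d := hsep he hd (Ne.symm hde)
  rw [mem_ball] at ha hb
  linarith [hD d hd, dist_comm d e, dist_triangle4_left a b d e]

theorem exists_pairwiseDisjoint_isClopen_nhds_of_separated
    (hzero : TopologicalSpace.IsTopologicalBasis {s : Set X | IsClopen s}) {r : X → ℝ}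
    (hr : LipschitzWith 1 r) {D : Set X} (hD : ∀ d ∈ D, 0 < r d)
    (hsep : D.Pairwise fun d e => r d ≤ 20 * dist d e) :
    ∃ V : X → Set X, (∀ d ∈ D, IsClopen (V d) ∧ d ∈ V d ∧ V d ⊆ ball d (r d)) ∧
      D.PairwiseDisjoint V ∧
      ∀ x, 0 < r x → x ∉ ⋃ d ∈ D, V d → ∀ᶠ y in 𝓝 x, y ∉ ⋃ d ∈ D, V d := by
  have hV : ∀ d, ∃ V, d ∈ D → IsClopen V ∧ d ∈ V ∧ V ⊆ ball d (r d / 80) := by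
    intro d
    by_cases hd : d ∈ D
    · obtain ⟨V, hV, hdV, hsub⟩ := hzero.exists_subset_of_mem_open
        (mem_ball_self (x := d) (by linarith [hD d hd] : 0 < r d / 80)) isOpen_ball
      exact ⟨V, fun _ => ⟨hV, hdV, hsub⟩⟩
    · exact ⟨∅, fun h => absurd h hd⟩
  choose V hV using hV
  refine ⟨V, fun d hd => ⟨(hV d hd).1, (hV d hd).2.1, (hV d hd).2.2.trans
    (ball_subset_ball (by linarith [hD d hd]))⟩, fun d hd e he hde => ?_, fun x hx hxV => ?_⟩
  · refine disjoint_left.mpr fun a had hae => hde (eq_of_separated_of_dist_lt hD hsep hd he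
      ((hV d hd).2.2 had) ((hV e he).2.2 hae) ?_)
    rw [dist_self]
    linarith [hD d hd]
  · have hball : ball x (r x / 400) ∈ 𝓝 x := ball_mem_nhds x (by linarith)
    have heq_of_mem_ball : ∀ d ∈ D, ∀ e ∈ D, ∀ a ∈ V d, ∀ b ∈ V e, a ∈ ball x (r x / 400) →
        b ∈ ball x (r x / 400) → d = e := by
      intro d hd e he a ha b hb hax hbx
      have had := (hV d hd).2.2 ha
      refine eq_of_separated_of_dist_lt hD hsep hd he had ((hV e he).2.2 hb) ?_
      have hrx := hr.le_add_mul x d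
      rw [NNReal.coe_one, one_mul] at hrx
      rw [mem_ball] at had hax hbx
      linarith [dist_triangle_left x d a, dist_triangle_right a b x]
    by_cases hmeet : ∃ d ∈ D, ∃ a ∈ V d, a ∈ ball x (r x / 400)
    · obtain ⟨d, hd, a, ha, hax⟩ := hmeet
      have hxd : x ∉ V d := fun h => hxV (mem_biUnion hd h)
      filter_upwards [hball, (hV d hd).1.compl.isOpen.eventually_mem hxd] with y hy hyd hyV
      obtain ⟨e, he, hye⟩ := mem_iUnion₂.mp hyV
      obtain rfl := heq_of_mem_ball d hd e he a ha y hye hax hy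
      exact hyd hye
    · filter_upwards [hball] with y hy hyV
      obtain ⟨e, he, hye⟩ := mem_iUnion₂.mp hyV
      exact hmeet ⟨e, he, y, hye, hy⟩

end SeparatedNets

theorem exists_eqOn_of_pairwiseDisjoint {ι X W : Type*} {D : Set ι} {V : ι → Set X}
    (hV : D.PairwiseDisjoint V) (φ : ι → X → W) (w : W) :
    ∃ ψ : X → W, (∀ d ∈ D, EqOn ψ (φ d) (V d)) ∧ ∀ y ∉ ⋃ d ∈ D, V d, ψ y = w := by
  have hψ : ∀ y, ∃ v, (∀ d ∈ D, y ∈ V d → v = φ d y) ∧ (y ∉ ⋃ d ∈ D, V d → v = w) := by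
    intro y
    by_cases hy : y ∈ ⋃ d ∈ D, V d
    · obtain ⟨d, hd, hyd⟩ := mem_iUnion₂.mp hy
      refine ⟨φ d y, fun e he hye => ?_, fun h => absurd hy h⟩
      rw [hV.elim_set hd he y hyd hye]
    · exact ⟨w, fun d hd hyd => absurd (mem_biUnion hd hyd) hy, fun _ => rfl⟩
  choose ψ hψ hψ_off using hψ
  exact ⟨ψ, fun d hd y hy => hψ y d hd hy, hψ_off⟩

/-- A stage in the construction of a map `X → W`: the values on `settled` are final, while `label`
is only a provisional value elsewhere. -/
structure Stage (X W : Type*) [TopologicalSpace X] where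
  settled : Set X
  label : X → W
  eventually_eq : ∀ x ∉ settled, ∀ᶠ y in 𝓝 x, y ∉ settled ∧ label y = label x

namespace Stage

/-- The stage with the single label `w`, at which exactly the points of the open set `U` are
unsettled. -/
def const {X W : Type*} [TopologicalSpace X] (U : Set X) (hU : IsOpen U) (w : W) : Stage X W where
  settled := Uᶜ
  label := fun _ => w
  eventually_eq := fun x hx => by
    filter_upwards [hU.eventually_mem (notMem_compl_iff.mp hx)] with y hy
    exact ⟨notMem_compl_iff.mpr hy, rfl⟩

theorem isOpen_setOf_notMem_settled_and_label_eq {X W : Type*} [TopologicalSpace X]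
    (s : Stage X W) (w : W) : IsOpen {x | x ∉ s.settled ∧ s.label x = w} :=
  isOpen_iff_eventually.mpr fun x hx => by
    filter_upwards [s.eventually_eq x hx.1] with y hy
    exact ⟨hy.1, hy.2.trans hx.2⟩

/-- `t` is an admissible successor of the stage `s`: labels increase and those of settled points are
kept, the newly settled points are `ε`-dense, and each of them is a limit of points that carry
any given larger label in `t`. In `exists_near`, the point `d` is also required to be closer to `x`
than any point settled before. -/
structure IsRefinement {X W : Type*} [PseudoMetricSpace X] [Preorder W] (ε : ℝ)
    (s t : Stage X W) : Prop where
  settled_subset : s.settled ⊆ t.settled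
  label_eq : ∀ x ∈ t.settled, t.label x = s.label x
  label_le : ∀ x, s.label x ≤ t.label x
  exists_near : ∀ x ∉ s.settled, ∃ d ∈ t.settled \ s.settled, s.label d = s.label x ∧
    dist x d < ε ∧ ∀ y ∈ s.settled, dist x d < dist x y
  frequently_label_eq : ∀ d ∈ t.settled \ s.settled, ∀ v, s.label d ≤ v →
    ∃ᶠ z in 𝓝 d, z ∉ t.settled ∧ t.label z = v

theorem exists_settled_eq_compl_union {X W : Type*} [TopologicalSpace X] [T1Space X]
    [FirstCountableTopology X] [∀ x : X, (𝓝[≠] x).NeBot] [Preorder W] [Countable W]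
    (hzero : TopologicalSpace.IsTopologicalBasis {s : Set X | IsClopen s}) {U D : Set X}
    (hU : IsOpen U) {V : X → Set X} (hV : ∀ d ∈ D, IsClopen (V d) ∧ d ∈ V d ∧ V d ⊆ U)
    (hdisj : D.PairwiseDisjoint V)
    (hV_off : ∀ x ∈ U, x ∉ ⋃ d ∈ D, V d → ∀ᶠ y in 𝓝 x, y ∉ ⋃ d ∈ D, V d) (w : W) :
    ∃ t : Stage X W, t.settled = Uᶜ ∪ D ∧ (∀ x ∈ t.settled, t.label x = w) ∧
      (∀ x, w ≤ t.label x) ∧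
      ∀ d ∈ D, ∀ v, w ≤ v → ∃ᶠ z in 𝓝 d, z ∉ t.settled ∧ t.label z = v := by
  choose φ hφ_self hφ_eq hφ_freq using fun d : X =>
    exists_eventually_eq_of_ne_and_frequently_eq hzero d (⟨w, le_rfl⟩ : Ici w)
  obtain ⟨ψ, hψ, hψ_off⟩ := exists_eqOn_of_pairwiseDisjoint hdisj φ ⟨w, le_rfl⟩
  have hψ_settled : ∀ x ∈ Uᶜ ∪ D, ψ x = ⟨w, le_rfl⟩ := by
    rintro x (hxU | hxD)
    · exact hψ_off x fun hx => hxU (iUnion₂_subset (fun d hd => (hV d hd).2.2) hx)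
    · rw [hψ x hxD (hV x hxD).2.1, hφ_self]
  have hV_eventually : ∀ d ∈ D, ∀ x ∈ V d, ∀ᶠ y in 𝓝 x, y ≠ d → y ∉ Uᶜ ∪ D ∧ ψ y = φ d y := by
    intro d hd x hx
    filter_upwards [(hV d hd).1.isOpen.eventually_mem hx] with y hy hyd
    have hyD : y ∉ D := fun h => hyd (hdisj.elim_set h hd y (hV y h).2.1 hy)
    exact ⟨not_or.mpr ⟨notMem_compl_iff.mpr ((hV d hd).2.2 hy), hyD⟩, hψ d hd hy⟩
  refine ⟨⟨Uᶜ ∪ D, fun x => ψ x, fun x hx => ?_⟩, rfl,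
    fun x hx => congrArg Subtype.val (hψ_settled x hx), fun x => (ψ x).2, fun d hd v hv => ?_⟩
  · obtain ⟨hxU, hxD⟩ := not_or.mp hx
    rw [notMem_compl_iff] at hxU
    by_cases hxV : x ∈ ⋃ d ∈ D, V d
    · obtain ⟨d, hd, hxd⟩ := mem_iUnion₂.mp hxV
      have hne : x ≠ d := fun h => hxD (h ▸ hd)
      filter_upwards [hV_eventually d hd x hxd, eventually_ne_nhds hne, hφ_eq d x hne]
        with y hy hyd hyφ
      exact ⟨(hy hyd).1, congrArg Subtype.val (by rw [(hy hyd).2, hyφ, hψ d hd hxd])⟩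
    · filter_upwards [hU.eventually_mem hxU, hV_off x hxU hxV] with y hyU hyV
      have hyD : y ∉ D := fun h => hyV (mem_biUnion h (hV y h).2.1)
      exact ⟨not_or.mpr ⟨notMem_compl_iff.mpr hyU, hyD⟩, by rw [hψ_off y hyV, hψ_off x hxV]⟩
  · refine (frequently_nhdsWithin_iff.mp (hφ_freq d ⟨v, hv⟩)).mp ?_
    filter_upwards [hV_eventually d hd d (hV d hd).2.1] with z hz hzv
    exact ⟨(hz hzv.2).1, congrArg Subtype.val ((hz hzv.2).2.trans hzv.1)⟩

section Refinement

variable {X W : Type*} [MetricSpace X] [∀ x : X, (𝓝[≠] x).NeBot] [Preorder W] [Countable W]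

theorem exists_isRefinement_const
    (hzero : TopologicalSpace.IsTopologicalBasis {s : Set X | IsClopen s}) {ε : ℝ} (hε : 0 < ε)
    {U : Set X} (hU : IsOpen U) (w : W) : ∃ t, IsRefinement ε (const U hU w) t := by
  obtain ⟨r, hr, hrε, hrU, hr_dist⟩ := exists_lipschitzWith_one_le_pos_iff_mem hU hε
  obtain ⟨D, hD, hsep, hnear⟩ := exists_separated_net_of_lipschitzWith_one hr hrε
  obtain ⟨V, hV, hdisj, hV_off⟩ :=
    exists_pairwiseDisjoint_isClopen_nhds_of_separated hzero hr hD hsep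
  have hVU : ∀ d ∈ D, V d ⊆ U := fun d hd y hy => by
    by_contra hyU
    exact absurd (hr_dist d y hyU) (not_le.mpr (mem_ball'.mp ((hV d hd).2.2 hy)))
  obtain ⟨t, hts, ht_eq, ht_le, ht_freq⟩ := exists_settled_eq_compl_union hzero hU
    (fun d hd => ⟨(hV d hd).1, (hV d hd).2.1, hVU d hd⟩) hdisj
    (fun x hx => hV_off x ((hrU x).mpr hx)) w
  refine ⟨t, hts.symm ▸ subset_union_left, ht_eq, ht_le, fun x hx => ?_, fun d hd v hv => ?_⟩
  · obtain ⟨d, hd, hxd⟩ := hnear x ((hrU x).mpr (notMem_compl_iff.mp hx))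
    exact ⟨d, ⟨hts.symm ▸ Or.inr hd, notMem_compl_iff.mpr ((hrU d).mp (hD d hd))⟩, rfl,
      hxd.trans_le (hrε x), fun y hy => hxd.trans_le (hr_dist x y hy)⟩
  · exact ht_freq d ((hts ▸ hd.1).resolve_left hd.2) v hv

theorem exists_isRefinement
    (hzero : TopologicalSpace.IsTopologicalBasis {s : Set X | IsClopen s}) {ε : ℝ} (hε : 0 < ε)
    (s : Stage X W) : ∃ t, IsRefinement ε s t := by
  choose T hT using fun w => exists_isRefinement_const hzero hε
    (s.isOpen_setOf_notMem_settled_and_label_eq w) w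
  have hcompl : ∀ x, x ∈ s.settled → x ∈ (T (s.label x)).settled := fun x hx =>
    (hT _).settled_subset fun h => h.1 hx
  refine ⟨⟨{x | x ∈ (T (s.label x)).settled}, fun x => (T (s.label x)).label x, fun x hx => ?_⟩,
    ⟨hcompl, fun x hx => (hT _).label_eq x hx, fun x => (hT _).label_le x, fun x hx => ?_,
      fun d hd v hv => ?_⟩⟩
  · filter_upwards [s.eventually_eq x (mt (hcompl x) hx), (T _).eventually_eq x hx] with y hy hyT
    rw [hy.2]
    exact hyT
  · obtain ⟨d, ⟨hdT, hd⟩, -, hdε, hdist⟩ := (hT (s.label x)).exists_near x fun h => h ⟨hx, rfl⟩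
    obtain ⟨hds, hdx⟩ := notMem_compl_iff.mp hd
    refine ⟨d, ⟨?_, hds⟩, hdx, hdε, fun y hy => hdist y fun h => h.1 hy⟩
    rwa [mem_ofPred, hdx]
  · refine ((hT (s.label d)).frequently_label_eq d ⟨hd.1, fun h => h ⟨hd.2, rfl⟩⟩ v hv).mp ?_
    filter_upwards [s.eventually_eq d hd.2] with z hz hzT
    rw [hz.2]
    exact hzT

end Refinement

/-- A sequence of stages, starting with all points unsettled, in which stage `n + 1` refines stage
`n` at scale `1 / (n + 1)`. -/
structure IsResolution {X W : Type*} [PseudoMetricSpace X] [Preorder W] (s : ℕ → Stage X W) :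
    Prop where
  settled_zero : (s 0).settled = ∅
  isRefinement : ∀ n : ℕ, IsRefinement (1 / ((n : ℝ) + 1)) (s n) (s (n + 1))

theorem exists_isResolution {X W : Type*} [MetricSpace X] [∀ x : X, (𝓝[≠] x).NeBot] [Preorder W]
    [Countable W] (hzero : TopologicalSpace.IsTopologicalBasis {s : Set X | IsClopen s}) (w : W) :
    ∃ s : ℕ → Stage X W, (∀ x, (s 0).label x = w) ∧ IsResolution s := by
  choose step hstep using fun n : ℕ =>
    exists_isRefinement (X := X) (W := W) hzero (Nat.one_div_pos_of_nat (α := ℝ) (n := n))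
  exact ⟨fun n => Nat.rec (const univ isOpen_univ w) step n, fun _ => rfl, compl_univ,
    fun n => hstep n _⟩

/-- `f` is a limit of the labels of `s`: it agrees with the labels of settled points, bounds all
labels from above, and is attained by the labels of each point while that point is unsettled. -/
structure IsLimit {X W : Type*} [TopologicalSpace X] [Preorder W] (s : ℕ → Stage X W)
    (f : X → W) : Prop where
  eq_label : ∀ n, ∀ x ∈ (s n).settled, f x = (s n).label x
  label_le : ∀ n x, (s n).label x ≤ f x
  exists_label_eq : ∀ x, ∃ n, x ∉ (s n).settled ∧ (s n).label x = f x

theorem IsLimit.eventually_le {X W : Type*} [TopologicalSpace X] [Preorder W] {s : ℕ → Stage X W}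
    {f : X → W} (hf : IsLimit s f) (x : X) : ∀ᶠ y in 𝓝 x, f x ≤ f y := by
  obtain ⟨n, hx, hxf⟩ := hf.exists_label_eq x
  filter_upwards [(s n).eventually_eq x hx] with y hy
  exact hxf.symm.le.trans (hy.2.symm.le.trans (hf.label_le n y))

namespace IsResolution

variable {X W : Type*} [PseudoMetricSpace X] [Preorder W] {s : ℕ → Stage X W}

theorem monotone_label (hs : IsResolution s) (x : X) : Monotone fun n => (s n).label x :=
  monotone_nat_of_le_succ fun n => (hs.isRefinement n).label_le x

theorem monotone_settled (hs : IsResolution s) : Monotone fun n => (s n).settled :=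
  monotone_nat_of_le_succ fun n => (hs.isRefinement n).settled_subset

theorem exists_mem_settled_succ_diff (hs : IsResolution s) {x : X} {n : ℕ}
    (hx : x ∈ (s n).settled) : ∃ m, x ∈ (s (m + 1)).settled \ (s m).settled := by
  induction n with
  | zero => simp [hs.settled_zero] at hx
  | succ n ih =>
    by_cases hxn : x ∈ (s n).settled
    · exact ih hxn
    · exact ⟨n, hx, hxn⟩

theorem label_eq_of_mem_settled_succ (hs : IsResolution s) {x : X} {m n : ℕ} (hmn : m ≤ n)
    (hx : x ∈ (s (m + 1)).settled) : (s n).label x = (s m).label x := by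
  induction n, hmn using Nat.le_induction with
  | base => rfl
  | succ n hmn ih =>
    exact ((hs.isRefinement n).label_eq x (hs.monotone_settled (Nat.succ_le_succ hmn) hx)).trans ih

theorem exists_isLimit [WellFoundedGT W] (hs : IsResolution s) : ∃ f, IsLimit s f := by
  suffices h : ∀ x, ∃ w, (∀ n, x ∈ (s n).settled → w = (s n).label x) ∧
      (∀ n, (s n).label x ≤ w) ∧ ∃ n, x ∉ (s n).settled ∧ (s n).label x = w by
    choose f hf_eq hf_le hf_exists using h
    exact ⟨f, fun n x => hf_eq x n, fun n x => hf_le x n, hf_exists⟩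
  intro x
  by_cases hx : ∃ n, x ∈ (s n).settled
  · obtain ⟨n, hn⟩ := hx
    obtain ⟨m, hm, hm'⟩ := hs.exists_mem_settled_succ_diff hn
    refine ⟨(s m).label x, fun k hk => ?_, fun k => ?_, m, hm', rfl⟩
    · have hmk : m ≤ k := le_of_not_ge fun hkm => hm' (hs.monotone_settled hkm hk)
      exact (hs.label_eq_of_mem_settled_succ hmk hm).symm
    · rcases le_total k m with hkm | hmk
      · exact hs.monotone_label x hkm
      · exact (hs.label_eq_of_mem_settled_succ hmk hm).le
  · push Not at hx
    obtain ⟨m, hm⟩ := WellFoundedGT.monotone_chain_condition' ⟨_, hs.monotone_label x⟩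
    refine ⟨(s m).label x, fun k hk => absurd hk (hx k), fun k => ?_, m, hx m, rfl⟩
    rcases le_total k m with hkm | hmk
    · exact hs.monotone_label x hkm
    · exact not_lt_iff_le_imp_ge.mp (hm k hmk) (hs.monotone_label x hmk)

variable {f : X → W}

theorem frequently_eq_of_mem_settled (hs : IsResolution s) (hf : IsLimit s f) {n : ℕ} {d : X}
    (hd : d ∈ (s n).settled) {v : W} (hv : f d ≤ v) : ∃ᶠ z in 𝓝[≠] d, f z = v := by
  obtain ⟨m, hd⟩ := hs.exists_mem_settled_succ_diff hd
  refine frequently_nhdsWithin_iff.mpr (nhds_basis_ball.frequently_iff.mpr fun δ hδ => ?_)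
  obtain ⟨z, hzδ, hz, hzv⟩ := nhds_basis_ball.frequently_iff.mp
    ((hs.isRefinement m).frequently_label_eq d hd v ((hf.label_le m d).trans hv)) (δ / 2)
    (half_pos hδ)
  obtain ⟨e, ⟨he, he'⟩, hez, -, hdist⟩ := (hs.isRefinement (m + 1)).exists_near z hz
  have hze := hdist d hd.1
  rw [mem_ball] at hzδ
  refine ⟨e, mem_ball.mpr (by linarith [dist_triangle_left e d z]), ?_, fun h => he' (h ▸ hd.1)⟩
  calc f e = (s (m + 2)).label e := hf.eq_label _ e he
    _ = (s (m + 1)).label e := (hs.isRefinement (m + 1)).label_eq e he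
    _ = v := hez.trans hzv

theorem mem_closure_setOf_mem_settled_and_le (hs : IsResolution s) (hf : IsLimit s f) (x : X) :
    x ∈ closure {d | (∃ n, d ∈ (s n).settled) ∧ f d ≤ f x} := by
  by_cases hx : ∃ n, x ∈ (s n).settled
  · exact subset_closure ⟨hx, le_rfl⟩
  · push Not at hx
    refine Metric.mem_closure_iff.mpr fun δ hδ => ?_
    obtain ⟨n, hn⟩ := exists_nat_one_div_lt hδ
    obtain ⟨d, hd, hdx, hdist, -⟩ := (hs.isRefinement n).exists_near x (hx n)
    refine ⟨d, ⟨⟨n + 1, hd.1⟩, ?_⟩, hdist.trans hn⟩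
    calc f d = (s (n + 1)).label d := hf.eq_label _ d hd.1
      _ = (s n).label d := (hs.isRefinement n).label_eq d hd.1
      _ = (s n).label x := hdx
      _ ≤ f x := hf.label_le n x

theorem closure_preimage_singleton (hs : IsResolution s) (hf : IsLimit s f) (w : W) :
    closure (f ⁻¹' {w}) = f ⁻¹' Iic w := by
  refine Subset.antisymm (fun x hx => ?_) (fun x hx => ?_)
  · obtain ⟨y, hyw, hxy⟩ :=
      ((mem_closure_iff_frequently.mp hx).and_eventually (hf.eventually_le x)).exists
    exact hxy.trans_eq hyw
  · refine closure_minimal ?_ isClosed_closure (hs.mem_closure_setOf_mem_settled_and_le hf x)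
    rintro d ⟨⟨n, hd⟩, hdx⟩
    exact mem_closure_iff_frequently.mpr
      ((hs.frequently_eq_of_mem_settled hf hd (hdx.trans hx)).filter_mono nhdsWithin_le_nhds)

theorem infinite_preimage_singleton [T1Space X] [Nonempty X] (hs : IsResolution s)
    (hf : IsLimit s f) {w₀ : W} (hw₀ : IsBot w₀) (hs₀ : ∀ x, (s 0).label x = w₀) (w : W) :
    (f ⁻¹' {w}).Infinite := by
  obtain ⟨x⟩ := ‹Nonempty X›
  obtain ⟨d, hd, -⟩ := (hs.isRefinement 0).exists_near x (hs.settled_zero ▸ notMem_empty x)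
  have hfd : f d = w₀ := (hf.eq_label 1 d hd.1).trans
    (((hs.isRefinement 0).label_eq d hd.1).trans (hs₀ d))
  exact Set.Infinite.of_accPt (accPt_iff_frequently_nhdsNE.mpr
    (hs.frequently_eq_of_mem_settled hf hd.1 (hfd.le.trans (hw₀ w))))

end IsResolution
end Stage

theorem exists_closure_preimage_singleton_eq_and_infinite {X W : Type*} [MetricSpace X]
    [Nonempty X] [∀ x : X, (𝓝[≠] x).NeBot] [Preorder W] [Countable W] [WellFoundedGT W]
    (hzero : TopologicalSpace.IsTopologicalBasis {s : Set X | IsClopen s}) {w₀ : W}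
    (hw₀ : IsBot w₀) :
    ∃ f : X → W, (∀ w, closure (f ⁻¹' {w}) = f ⁻¹' Iic w) ∧ ∀ w, (f ⁻¹' {w}).Infinite := by
  obtain ⟨s, hs₀, hs⟩ := Stage.exists_isResolution (X := X) hzero w₀
  obtain ⟨f, hf⟩ := hs.exists_isLimit
  exact ⟨f, hs.closure_preimage_singleton hf, hs.infinite_preimage_singleton hf hw₀ hs₀⟩

/-- The preorder on an S4D-frame given by `R`, so that `R⁻¹(w)` is `Iic w`. -/
abbrev IsS4DFrame.toPreorder {W : Type} {R RD : W → W → Prop} (hF : IsS4DFrame R RD) :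
    Preorder W where
  le := R
  le_refl := hF.refl
  le_trans _ _ _ h h' := hF.trans h h'

theorem cd_p_morphism_onto_rooted_full_frame_general (X : Type) [MetricSpace X] [Nonempty X]
    (hzero : TopologicalSpace.IsTopologicalBasis {s : Set X | IsClopen s})
    (hdii : ∀ x : X, ¬ IsOpen ({x} : Set X))
    {W : Type} [Countable W] (R RD : W → W → Prop) (hF : IsS4DFrame R RD)
    (hwf : WellFounded fun v w : W => R w v ∧ ¬ R v w)
    (w₀ : W) (hroot : ∀ w : W, R w₀ w) (hfull : ∀ x y : W, RD x y) :
    ∃ f : X → W, IsCdPMorphism R RD f := by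
  let := hF.toPreorder
  have : WellFoundedGT W := ⟨hwf⟩
  have : ∀ x : X, (𝓝[≠] x).NeBot := fun x =>
    ⟨fun h => hdii x ((isOpen_singleton_iff_punctured_nhds x).mpr h)⟩
  obtain ⟨f, hf_cl, hf_inf⟩ :=
    exists_closure_preimage_singleton_eq_and_infinite (X := X) hzero hroot
  refine ⟨f, fun w => (hf_inf w).nonempty, hf_cl, fun w => Subset.antisymm ?_ ?_⟩
  · exact fun x _ => hfull (f x) w
  · intro x _
    obtain ⟨y, hyw, hyx⟩ := (hf_inf w).nontrivial.exists_ne x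
    exact ⟨y, hyx, hyw⟩

/-- Case I of the main construction: if `X` is a nonempty
zero-dimensional dense-in-itself metric space and `F = (W, R, R_D)` is a finite
S4D-frame rooted at `w₀` (with `W = R(w₀)`) and `R_D = W × W`, then there is a
cd-p-morphism from `X` onto `F`. -/
theorem cd_p_morphism_onto_rooted_full_frame (X : Type) [MetricSpace X] [Nonempty X]
    (hzero : TopologicalSpace.IsTopologicalBasis {s : Set X | IsClopen s})
    (hdii : ∀ x : X, ¬ IsOpen ({x} : Set X))
    {W : Type} [Finite W] (R RD : W → W → Prop) (hF : IsS4DFrame R RD)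
    (w₀ : W) (hroot : ∀ w : W, R w₀ w) (hfull : ∀ x y : W, RD x y) :
    ∃ f : X → W, IsCdPMorphism R RD f := by
  let := hF.toPreorder
  exact cd_p_morphism_onto_rooted_full_frame_general X hzero hdii R RD hF
    (wellFounded_gt (α := W)) w₀ hroot hfull
end

section
/- Let X be a nonempty zero-dimensional dense-in-itself metric space and let F = (W, R, R_D) be a finite S4D-frame that is a T₁-frame and a DS-frame, such that W = R(w₀) for some point w₀ and R_D = (W × W) − {(w₀, w₀)}. Then there exists a cd-p-morphism from X onto F. -/
open Filter Metric Set TopologicalSpace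
open scoped ENNReal Topology

section LocallyConstantOn

variable {X Y : Type*} [TopologicalSpace X]

/-- `f` is constant near each point of `U`. For open `U` this says that the restriction of `f` to
`U` is locally constant in the sense of `IsLocallyConstant`. -/
def LocallyConstantOn (f : X → Y) (U : Set X) : Prop :=
  ∀ x ∈ U, ∀ᶠ y in 𝓝 x, f y = f x

theorem locallyConstantOn_sInf_setOf_mem {O : ℕ → Set X} (hO : ∀ n, IsClopen (O n)) :
    LocallyConstantOn (fun x => sInf {n | x ∈ O n}) (⋃ n, O n) := by
  intro x hx
  have hmem : x ∈ O (sInf {n | x ∈ O n}) := Nat.sInf_mem (mem_iUnion.1 hx)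
  have hbelow : ∀ᶠ y in 𝓝 x, ∀ i ∈ Iio (sInf {n | x ∈ O n}), y ∉ O i :=
    (eventually_all_finite (finite_Iio _)).2 fun i hi =>
      (hO i).compl.isOpen.mem_nhds (Nat.notMem_of_lt_sInf hi)
  filter_upwards [(hO _).isOpen.mem_nhds hmem, hbelow] with y hy hylt
  exact IsLeast.csInf_eq ⟨hy, fun i hi => not_lt.1 fun h => hylt i h hi⟩

theorem isOpen_sdiff_of_compl_mem_nhdsNE {U A : Set X} (hU : IsOpen U)
    (hA : ∀ x ∈ U, Aᶜ ∈ 𝓝[≠] x) : IsOpen (U \ A) := by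
  rw [isOpen_iff_mem_nhds]
  rintro x ⟨hxU, hxA⟩
  have hxA' : insert x Aᶜ ∈ 𝓝 x := insert_mem_nhds_iff.2 (hA x hxU)
  rw [insert_eq_of_mem (mem_compl hxA)] at hxA'
  exact inter_mem (hU.mem_nhds hxU) hxA'

theorem compl_mem_nhdsNE_of_subsingleton_inter [T1Space X] {M V : Set X} {x : X}
    (hV : V ∈ 𝓝 x) (hMV : (M ∩ V).Subsingleton) : Mᶜ ∈ 𝓝[≠] x := by
  filter_upwards [mem_nhdsWithin_of_mem_nhds hV,
    nhdsNE_le_cofinite x hMV.finite.compl_mem_cofinite] with y hyV hy hyM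
  exact hy ⟨hyM, hyV⟩

end LocallyConstantOn

section Index

theorem exists_strict_clopen_basis {X : Type*} [TopologicalSpace X] [FirstCountableTopology X]
    [T1Space X] (hX : IsTopologicalBasis {s : Set X | IsClopen s}) (a : X) [(𝓝[≠] a).NeBot]
    {V : Set X} (hV : V ∈ 𝓝 a) :
    ∃ K : ℕ → Set X, (∀ n, IsClopen (K n) ∧ K n ⊆ V) ∧ (𝓝 a).HasAntitoneBasis K ∧
      ∀ n, ∃ y ≠ a, y ∈ K n \ K (n + 1) := by
  obtain ⟨K, hK, hbasis⟩ :=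
    ((hX.nhds_hasBasis (a := a)).restrict_subset hV).exists_antitone_subbasis
  have hshrink : ∀ m, ∀ᶠ n in atTop, ∃ y ≠ a, y ∈ K m \ K n := fun m => by
    obtain ⟨y, hya, hym⟩ : ({a}ᶜ ∩ K m).Nonempty :=
      nonempty_of_mem (inter_mem_nhdsWithin _ (hbasis.mem m))
    filter_upwards [hbasis.eventually_subset (isOpen_compl_singleton.mem_nhds (Ne.symm hya))]
      with n hn
    exact ⟨y, hya, hym, fun hyn => hn hyn rfl⟩
  obtain ⟨φ, -, hφ, hφbasis⟩ := hbasis.subbasis_with_rel hshrink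
  exact ⟨K ∘ φ, fun n => ⟨(hK (φ n)).1.1, (hK (φ n)).2⟩, hφbasis, fun n => hφ n.lt_succ_self⟩

theorem exists_locallyConstantOn_compl_singleton {X : Type*} [TopologicalSpace X]
    [FirstCountableTopology X] [T1Space X] (hX : IsTopologicalBasis {s : Set X | IsClopen s})
    (a : X) [(𝓝[≠] a).NeBot] {V : Set X} (hV : V ∈ 𝓝 a) :
    ∃ g : X → ℕ, LocallyConstantOn g {a}ᶜ ∧ (∀ y ∉ V, g y = 0) ∧
      ∀ n, ∃ᶠ y in 𝓝[≠] a, g y = n := by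
  obtain ⟨K, hK, hbasis, hstrict⟩ := exists_strict_clopen_basis hX a hV
  let ringIndex (x : X) : ℕ := sInf {n | x ∈ (K (n + 1))ᶜ}
  have hindex_loc : LocallyConstantOn ringIndex {a}ᶜ := by
    refine fun x hx => locallyConstantOn_sInf_setOf_mem (fun n => (hK (n + 1)).1.compl) x ?_
    obtain ⟨n, hn⟩ := hbasis.mem_iff.1 (isOpen_compl_singleton.mem_nhds (Ne.symm hx))
    exact mem_iUnion.2 ⟨n, fun h => hn (hbasis.antitone n.le_succ h) rfl⟩
  have hindex_off : ∀ y ∉ V, ringIndex y = 0 := fun y hy =>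
    Nat.sInf_eq_zero.2 (Or.inl fun h => hy ((hK _).2 h))
  have hindex_eq : ∀ n, ∀ y ∈ K n \ K (n + 1), ringIndex y = n := fun n y hy =>
    IsLeast.csInf_eq ⟨hy.2, fun i hi => not_lt.1 fun h => hi (hbasis.antitone h hy.1)⟩
  -- Unpairing makes every value recur on infinitely many rings.
  refine ⟨fun x => (ringIndex x).unpair.1, fun x hx => (hindex_loc x hx).mono fun y hy => ?_,
    fun y hy => ?_, fun n => ?_⟩
  · simp only [hy]
  · simp only [hindex_off y hy, Nat.unpair_zero, Prod.fst_zero]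
  · refine (hbasis.1.inf_principal _).frequently_iff.2 fun {m} _ => ?_
    obtain ⟨y, hya, hy⟩ := hstrict (Nat.pair n m)
    exact ⟨y, ⟨hbasis.antitone (Nat.right_le_pair n m) hy.1, hya⟩,
      by simp only [hindex_eq _ y hy, Nat.unpair_pair]⟩

theorem exists_pairwiseDisjoint_ball {X : Type*} [PseudoMetricSpace X] {A : Set X}
    (hA : ∀ a ∈ A, Aᶜ ∈ 𝓝[≠] a) :
    ∃ r : X → ℝ, (∀ a ∈ A, 0 < r a) ∧ A.PairwiseDisjoint fun a => ball a (r a) := by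
  have hsep : ∀ a ∈ A, ∃ ε > 0, ∀ b ∈ A, b ≠ a → ε ≤ dist b a := fun a ha => by
    obtain ⟨ε, hε, h⟩ := Metric.mem_nhdsWithin_iff.1 (hA a ha)
    exact ⟨ε, hε, fun b hb hba => not_lt.1 fun hlt => h ⟨hlt, hba⟩ hb⟩
  choose! ε hε hsep using hsep
  refine ⟨fun a => ε a / 2, fun a ha => half_pos (hε a ha), fun a ha b hb hab =>
    ball_disjoint_ball ?_⟩
  have hab_le := hsep a ha b hb hab.symm
  have hba_le := hsep b hb a ha hab
  rw [dist_comm] at hab_le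
  linarith

theorem eventually_mem_ball_imp_mem_ball_two_mul {X : Type*} [PseudoMetricSpace X] {A : Set X}
    {x : X} (hx : Aᶜ ∈ 𝓝[≠] x) {r : X → ℝ} (hr : ∀ a ∈ A, 0 < r a) :
    ∀ᶠ y in 𝓝 x, ∀ a ∈ A, y ∈ ball a (r a) → x ∈ ball a (2 * r a) := by
  obtain ⟨ε, hε, hsep⟩ := Metric.mem_nhdsWithin_iff.1 hx
  filter_upwards [ball_mem_nhds x (half_pos hε)] with y hyx a ha hya
  rw [mem_ball] at *
  by_cases hax : a = x
  · rw [hax, dist_self, ← hax]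
    linarith [hr a ha]
  · have hdist : ε ≤ dist a x := not_lt.1 fun hlt => hsep ⟨hlt, hax⟩ ha
    linarith [dist_triangle_left x a y, dist_comm x a]

theorem exists_locallyConstantOn_sdiff {X : Type*} [MetricSpace X] [PerfectSpace X]
    (hX : IsTopologicalBasis {s : Set X | IsClopen s}) {U A : Set X} (hAU : A ⊆ U)
    (hA : ∀ x ∈ U, Aᶜ ∈ 𝓝[≠] x) :
    ∃ g : X → ℕ, LocallyConstantOn g (U \ A) ∧ ∀ a ∈ A, ∀ n, ∃ᶠ y in 𝓝[≠] a, g y = n := by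
  obtain ⟨r, hr, hdisj⟩ := exists_pairwiseDisjoint_ball fun a ha => hA a (hAU ha)
  choose g hg_loc hg_off hg_freq using fun a : A => exists_locallyConstantOn_compl_singleton hX
    a.1 (ball_mem_nhds a.1 (half_pos (hr a a.2)))
  have hball : ∀ x ∈ U, ∀ᶠ y in 𝓝 x, ∀ a : A, g a y ≠ 0 → x ∈ ball a.1 (r a) := fun x hx => by
    filter_upwards [eventually_mem_ball_imp_mem_ball_two_mul (hA x hx)
      fun a ha => half_pos (hr a ha)] with y hy a hay
    rw [← mul_div_cancel₀ (r a) two_ne_zero]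
    exact hy a a.2 (not_imp_comm.1 (hg_off a y) hay)
  have hsum_eq : ∀ x ∈ U, ∀ c : A, x ∈ ball c.1 (r c) →
      ∀ᶠ y in 𝓝 x, ∑ᶠ a : A, g a y = g c y := fun x hx c hxc => by
    filter_upwards [hball x hx] with y hy
    refine finsum_eq_single _ c fun a hac => not_imp_comm.1 (hy a) fun hxa => hac ?_
    exact Subtype.ext (hdisj.elim_set a.2 c.2 x hxa hxc)
  refine ⟨fun y => ∑ᶠ a : A, g a y, fun x hx => ?_, fun a ha n => ?_⟩
  · by_cases hc : ∃ c : A, x ∈ ball c.1 (r c)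
    · obtain ⟨c, hxc⟩ := hc
      have heq := hsum_eq x hx.1 c hxc
      filter_upwards [heq, hg_loc c x fun h => hx.2 (h ▸ c.2)] with y hy hgy
      rw [hy, hgy, heq.self_of_nhds]
    · have hzero : ∀ᶠ y in 𝓝 x, ∑ᶠ a : A, g a y = 0 := by
        filter_upwards [hball x hx.1] with y hy
        exact finsum_eq_zero_of_forall_eq_zero fun a => not_imp_comm.1 (hy a) fun h => hc ⟨a, h⟩
      filter_upwards [hzero] with y hy
      rw [hy, hzero.self_of_nhds]
  · have heq := hsum_eq a (hAU ha) ⟨a, ha⟩ (mem_ball_self (hr a ha))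
    exact ((hg_freq ⟨a, ha⟩ n).and_eventually (heq.filter_mono nhdsWithin_le_nhds)).mono
      fun y hy => hy.2.trans hy.1

end Index

section Net

theorem exists_maximal_pairwise {α : Type*} {r : α → α → Prop} (hr : ∀ ⦃x y⦄, r x y → r y x)
    (U : Set α) : ∃ M ⊆ U, M.Pairwise r ∧ ∀ x ∈ U, x ∉ M → ∃ a ∈ M, ¬ r x a := by
  obtain ⟨M, hM⟩ : ∃ M, Maximal (fun M : Set α => M ⊆ U ∧ M.Pairwise r) M := by
    refine zorn_subset _ fun c hc hchain => ⟨⋃₀ c, ⟨sUnion_subset fun s hs => (hc hs).1, ?_⟩,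
      fun s => subset_sUnion_of_mem⟩
    exact (pairwise_sUnion hchain.directedOn).2 fun s hs => (hc hs).2
  refine ⟨M, hM.prop.1, hM.prop.2, fun x hxU hxM => ?_⟩
  by_contra! h
  have hinsert : (insert x M).Pairwise r :=
    hM.prop.2.insert_of_notMem hxM fun a ha => ⟨h a ha, hr (h a ha)⟩
  exact hxM (hM.le_of_ge ⟨insert_subset hxU hM.prop.1, hinsert⟩ (subset_insert x M)
    (mem_insert x M))

theorem LocallyConstantOn.exists_net {X W : Type*} [EMetricSpace X] {f : X → W} {U : Set X}
    (hf : LocallyConstantOn f U) {δ : X → ℝ≥0∞} (hδ : LowerSemicontinuous δ)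
    (hpos : ∀ x ∈ U, 0 < δ x) :
    ∃ M ⊆ U, (∀ x ∈ U, Mᶜ ∈ 𝓝[≠] x) ∧ ∀ x ∈ U, ∃ a ∈ M, f a = f x ∧ edist a x < δ x := by
  obtain ⟨M, hMU, hsep, hmax⟩ := exists_maximal_pairwise
    (r := fun x y => f x = f y → min (δ x) (δ y) ≤ edist x y)
    (fun x y h hyx => by rw [min_comm, edist_comm]; exact h hyx.symm) U
  refine ⟨M, hMU, fun x hx => ?_, fun x hx => ?_⟩
  · obtain ⟨c, hc, hcδ⟩ := exists_between (hpos x hx)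
    have hV : {y | f y = f x ∧ c < δ y ∧ edist y x < c / 2} ∈ 𝓝 x :=
      (hf x hx).and ((hδ x c hcδ).and (eball_mem_nhds x (ENNReal.half_pos hc.ne')))
    refine compl_mem_nhdsNE_of_subsingleton_inter hV ?_
    rintro y ⟨hyM, hfy, hcy, hyx⟩ z ⟨hzM, hfz, hcz, hzx⟩
    by_contra hyz
    refine (hsep hyM hzM hyz (hfy.trans hfz.symm)).not_gt ?_
    calc edist y z ≤ edist y x + edist z x := edist_triangle_right y z x
      _ < c / 2 + c / 2 := ENNReal.add_lt_add hyx hzx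
      _ = c := ENNReal.add_halves c
      _ < min (δ y) (δ z) := lt_min hcy hcz
  · by_cases hxM : x ∈ M
    · exact ⟨x, hxM, rfl, by simpa only [edist_self] using hpos x hx⟩
    · obtain ⟨a, haM, ha⟩ := hmax x hx hxM
      push Not at ha
      exact ⟨a, haM, ha.1.symm, by
        rw [edist_comm]; exact ha.2.trans_le (min_le_left _ _)⟩

/- The scale of the net is capped by the distance to `Uᶜ`, so that the net follows each label class
up to the boundary of `U`. -/
theorem LocallyConstantOn.exists_net_accPt {X W : Type*} [EMetricSpace X] {f : X → W} {U : Set X}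
    (hf : LocallyConstantOn f U) (hU : IsOpen U) {ε : ℝ≥0∞} (hε : 0 < ε) :
    ∃ M ⊆ U, (∀ x ∈ U, Mᶜ ∈ 𝓝[≠] x) ∧ (∀ x ∈ U, ∃ a ∈ M, f a = f x ∧ edist a x < ε) ∧
      ∀ x ∉ U, ∀ u, AccPt x (𝓟 (U ∩ f ⁻¹' {u})) → AccPt x (𝓟 (M ∩ f ⁻¹' {u})) := by
  have hδ : Continuous fun x => min ε (infEDist x Uᶜ) := continuous_const.min continuous_infEDist
  have hpos : ∀ x ∈ U, 0 < min ε (infEDist x Uᶜ) := fun x hx =>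
    lt_min hε (infEDist_pos_iff_notMem_closure.2 (by
      rwa [hU.isClosed_compl.closure_eq, notMem_compl_iff]))
  obtain ⟨M, hMU, hM, hnet⟩ := hf.exists_net hδ.lowerSemicontinuous hpos
  refine ⟨M, hMU, hM, fun x hx => ?_, fun x hxU u hacc => ?_⟩
  · obtain ⟨a, haM, hfa, ha⟩ := hnet x hx
    exact ⟨a, haM, hfa, ha.trans_le (min_le_left _ _)⟩
  · rw [accPt_iff_nhds] at hacc ⊢
    intro V hV
    obtain ⟨η, hη, hηV⟩ := EMetric.mem_nhds_iff.1 hV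
    obtain ⟨y, ⟨hyx, hyU, hfy⟩, -⟩ := hacc _ (eball_mem_nhds x (ENNReal.half_pos hη.ne'))
    obtain ⟨a, haM, hfa, ha⟩ := hnet y hyU
    refine ⟨a, ⟨hηV ?_, haM, hfa.trans hfy⟩, fun h => hxU (h ▸ hMU haM)⟩
    calc edist a x ≤ edist a y + edist y x := edist_triangle a y x
      _ < infEDist y Uᶜ + edist y x :=
        ENNReal.add_lt_add_right (hyx.trans_le le_top).ne (ha.trans_le (min_le_right _ _))
      _ ≤ edist y x + edist y x := by gcongr; exact infEDist_le_edist_of_mem hxU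
      _ ≤ η / 2 + η / 2 := add_le_add hyx.le hyx.le
      _ = η := ENNReal.add_halves η

end Net

section Stages

variable {X W : Type*}

/-- A stage in the construction of a map `X → W`: the labels are locally constant on the open set
of points still unsettled, and the labels of the points in `settled`, a set closed and discrete
in `unsettled`, become final. -/
structure Stage_s19 (X W : Type*) [TopologicalSpace X] where
  unsettled : Set X
  settled : Set X
  label : X → W
  isOpen_unsettled : IsOpen unsettled
  settled_subset : settled ⊆ unsettled
  compl_settled_mem_nhdsNE : ∀ x ∈ unsettled, settledᶜ ∈ 𝓝[≠] x
  locallyConstantOn_label : LocallyConstantOn label unsettled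

/-- The admissible transitions from a stage `σ` to a stage `τ`: labels move along `Q`, every
`Q`-successor of a label settled in `σ` is settled nearby in `τ`, and the points settled in `τ` are
`ε`-dense in each label class. -/
structure Stage_s19.IsNext [EMetricSpace X] (Q : W → W → Prop) (ε : ℝ≥0∞) (σ τ : Stage_s19 X W) :
    Prop where
  unsettled_eq : τ.unsettled = σ.unsettled \ σ.settled
  label_rel : ∀ x ∈ τ.unsettled, Q (σ.label x) (τ.label x)
  label_eq : ∀ x ∉ τ.unsettled, τ.label x = σ.label x
  exists_settled_near : ∀ x ∈ τ.unsettled, ∃ a ∈ τ.settled, τ.label a = τ.label x ∧ edist a x < ε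
  accPt_settled : ∀ a ∈ σ.settled, ∀ u, Q (σ.label a) u →
    AccPt a (𝓟 (τ.settled ∩ τ.label ⁻¹' {u}))

/-- A sequence of successive stages, with density scales tending to `0`. -/
structure Stage_s19.IsTower [EMetricSpace X] (Q : W → W → Prop) (T : ℕ → Stage_s19 X W) : Prop where
  unsettled_zero : (T 0).unsettled = univ
  isNext : ∀ n, (T n).IsNext Q (n : ℝ≥0∞)⁻¹ (T (n + 1))

/-- `F` is a limit of the labellings of `T`: each point has its `F`-label at infinitely many
stages. -/
def Stage_s19.IsLimit [TopologicalSpace X] (T : ℕ → Stage_s19 X W) (F : X → W) : Prop :=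
  ∀ x, ∃ᶠ n in atTop, (T n).label x = F x

namespace Stage_s19

theorem exists_isLimit [TopologicalSpace X] [Finite W] (T : ℕ → Stage_s19 X W) :
    ∃ F, IsLimit T F := by
  choose F hF using fun x => frequently_exists.1
    (Frequently.of_forall (f := atTop) fun n => ⟨(T n).label x, rfl⟩ :
      ∃ᶠ n in atTop, ∃ v, (T n).label x = v)
  exact ⟨F, hF⟩

theorem exists_relabel [MetricSpace X] [PerfectSpace X] [Countable W]
    (hX : IsTopologicalBasis {s : Set X | IsClopen s}) {Q : W → W → Prop}
    (hQ : ∀ v, ∃ u, Q v u) (σ : Stage_s19 X W) :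
    ∃ f : X → W, LocallyConstantOn f (σ.unsettled \ σ.settled) ∧
      (∀ x ∈ σ.unsettled \ σ.settled, Q (σ.label x) (f x)) ∧
      (∀ x ∉ σ.unsettled \ σ.settled, f x = σ.label x) ∧
      ∀ a ∈ σ.settled, ∀ u, Q (σ.label a) u →
        AccPt a (𝓟 ((σ.unsettled \ σ.settled) ∩ f ⁻¹' {u})) := by
  classical
  obtain ⟨g, hg_loc, hg_freq⟩ :=
    exists_locallyConstantOn_sdiff hX σ.settled_subset σ.compl_settled_mem_nhdsNE
  choose e he using fun v => (to_countable {u | Q v u}).exists_eq_range (hQ v)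
  have hopen := isOpen_sdiff_of_compl_mem_nhdsNE σ.isOpen_unsettled σ.compl_settled_mem_nhdsNE
  refine ⟨(σ.unsettled \ σ.settled).piecewise (fun x => e (σ.label x) (g x)) σ.label,
    fun x hx => ?_, fun x hx => ?_, fun x hx => piecewise_eq_of_notMem _ _ _ hx,
    fun a ha u hu => ?_⟩
  · filter_upwards [hopen.mem_nhds hx, σ.locallyConstantOn_label x hx.1, hg_loc x hx]
      with y hy hlabel hgy
    rw [piecewise_eq_of_mem _ _ _ hy, piecewise_eq_of_mem _ _ _ hx, hlabel, hgy]
  · rw [piecewise_eq_of_mem _ _ _ hx]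
    exact (he (σ.label x)).symm.subset (mem_range_self (g x))
  · obtain ⟨n, rfl⟩ : u ∈ range (e (σ.label a)) := he _ ▸ hu
    have haU := σ.settled_subset ha
    have hnear : ∀ᶠ y in 𝓝[≠] a, y ∈ σ.unsettled \ σ.settled ∧ σ.label y = σ.label a := by
      filter_upwards [mem_nhdsWithin_of_mem_nhds (σ.isOpen_unsettled.mem_nhds haU),
        σ.compl_settled_mem_nhdsNE a haU,
        mem_nhdsWithin_of_mem_nhds (σ.locallyConstantOn_label a haU)] with y hyU hyA hy
      exact ⟨⟨hyU, hyA⟩, hy⟩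
    refine accPt_iff_frequently_nhdsNE.2 (((hg_freq a ha n).and_eventually hnear).mono ?_)
    rintro y ⟨hgy, hy, hlabel⟩
    exact ⟨hy, by rw [mem_preimage, piecewise_eq_of_mem _ _ _ hy, hlabel, hgy, mem_singleton_iff]⟩

theorem exists_isNext [MetricSpace X] [PerfectSpace X] [Countable W]
    (hX : IsTopologicalBasis {s : Set X | IsClopen s}) {Q : W → W → Prop}
    (hQ : ∀ v, ∃ u, Q v u) {ε : ℝ≥0∞} (hε : 0 < ε) (σ : Stage_s19 X W) :
    ∃ τ, σ.IsNext Q ε τ := by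
  obtain ⟨f, hf, hrel, heq, hacc⟩ := σ.exists_relabel hX hQ
  have hopen := isOpen_sdiff_of_compl_mem_nhdsNE σ.isOpen_unsettled σ.compl_settled_mem_nhdsNE
  obtain ⟨M, hMU, hM, hnet, hMacc⟩ := hf.exists_net_accPt hopen hε
  exact ⟨⟨_, M, f, hopen, hMU, hM, hf⟩, rfl, hrel, heq, hnet,
    fun a ha u hu => hMacc a (fun h => h.2 ha) u (hacc a ha u hu)⟩

theorem exists_isTower [MetricSpace X] [PerfectSpace X] [Countable W]
    (hX : IsTopologicalBasis {s : Set X | IsClopen s}) {Q : W → W → Prop}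
    (hQ : ∀ v, ∃ u, Q v u) (σ : Stage_s19 X W) (hσ : σ.unsettled = univ) :
    ∃ T, T 0 = σ ∧ IsTower Q T := by
  choose step hstep using fun n : ℕ => exists_isNext (X := X) hX hQ
    (ENNReal.inv_pos.2 (ENNReal.natCast_ne_top n))
  exact ⟨fun n => Nat.rec σ step n, rfl, hσ, fun n => hstep n _⟩

namespace IsTower

variable [EMetricSpace X] {Q : W → W → Prop} {T : ℕ → Stage_s19 X W}

theorem antitone_unsettled (hT : IsTower Q T) : Antitone fun n => (T n).unsettled :=
  antitone_nat_of_succ_le fun n => (hT.isNext n).unsettled_eq.trans_subset sdiff_subset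

theorem notMem_unsettled_of_lt (hT : IsTower Q T) {n m : ℕ} (hnm : n < m) {x : X}
    (hx : x ∈ (T n).settled) : x ∉ (T m).unsettled := fun h =>
  ((hT.isNext n).unsettled_eq.subset (hT.antitone_unsettled hnm h)).2 hx

theorem exists_settled_or_forall_unsettled (hT : IsTower Q T) (x : X) :
    (∃ n, x ∈ (T n).settled) ∨ ∀ n, x ∈ (T n).unsettled := by
  refine or_iff_not_imp_left.2 fun h n => ?_
  induction n with
  | zero => exact hT.unsettled_zero ▸ mem_univ x
  | succ n ih => exact (hT.isNext n).unsettled_eq ▸ ⟨ih, fun hx => h ⟨n, hx⟩⟩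

theorem label_eq_of_settled (hT : IsTower Q T) {n m : ℕ} (hnm : n ≤ m) {x : X}
    (hx : x ∈ (T n).settled) : (T m).label x = (T n).label x := by
  induction m, hnm using Nat.le_induction with
  | base => rfl
  | succ m hnm ih =>
    exact ((hT.isNext m).label_eq x
      (hT.notMem_unsettled_of_lt (Nat.lt_succ_of_le hnm) hx)).trans ih

theorem label_eq_or_rel [IsTrans W Q] (hT : IsTower Q T) {n m : ℕ} (hnm : n ≤ m) (x : X) :
    (T n).label x = (T m).label x ∨ Q ((T n).label x) ((T m).label x) := by
  induction m, hnm using Nat.le_induction with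
  | base => exact Or.inl rfl
  | succ m _ ih =>
    by_cases hx : x ∈ (T (m + 1)).unsettled
    · have hrel := (hT.isNext m).label_rel x hx
      exact Or.inr (ih.elim (fun h => h ▸ hrel) fun h => _root_.trans h hrel)
    · rwa [(hT.isNext m).label_eq x hx]

variable {F : X → W}

theorem limit_eq_of_settled (hT : IsTower Q T) (hF : IsLimit T F) {n : ℕ} {x : X}
    (hx : x ∈ (T n).settled) : F x = (T n).label x := by
  obtain ⟨m, hm, hnm⟩ := ((hF x).and_eventually (eventually_ge_atTop n)).exists
  exact hm.symm.trans (hT.label_eq_of_settled hnm hx)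

theorem rel_limit [IsTrans W Q] (hT : IsTower Q T) (hF : IsLimit T F) {n : ℕ} {x : X}
    (hx : x ∈ (T (n + 1)).unsettled) : Q ((T n).label x) (F x) := by
  obtain ⟨m, hm, hnm⟩ := ((hF x).and_eventually (eventually_ge_atTop (n + 1))).exists
  have hrel := (hT.isNext n).label_rel x hx
  rw [← hm]
  exact (hT.label_eq_or_rel hnm x).elim (fun h => h ▸ hrel) (_root_.trans hrel)

theorem exists_unsettled_label_eq_limit (hT : IsTower Q T) (hF : IsLimit T F) (x : X) :
    ∃ n, x ∈ (T n).unsettled ∧ (T n).label x = F x := by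
  rcases hT.exists_settled_or_forall_unsettled x with ⟨n, hx⟩ | hx
  · exact ⟨n, (T n).settled_subset hx, (hT.limit_eq_of_settled hF hx).symm⟩
  · obtain ⟨n, hn⟩ := (hF x).exists
    exact ⟨n, hx n, hn⟩

theorem eventually_limit_rel [IsTrans W Q] (hT : IsTower Q T) (hF : IsLimit T F) (x : X) :
    ∀ᶠ y in 𝓝[≠] x, Q (F x) (F y) := by
  obtain ⟨n, hx, hlabel⟩ := hT.exists_unsettled_label_eq_limit hF x
  filter_upwards [mem_nhdsWithin_of_mem_nhds ((T n).isOpen_unsettled.mem_nhds hx),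
    (T n).compl_settled_mem_nhdsNE x hx,
    mem_nhdsWithin_of_mem_nhds ((T n).locallyConstantOn_label x hx)] with y hyU hyA hy
  have hy' : y ∈ (T (n + 1)).unsettled := (hT.isNext n).unsettled_eq ▸ ⟨hyU, hyA⟩
  exact (hy.trans hlabel) ▸ hT.rel_limit hF hy'

theorem accPt_limit_of_settled (hT : IsTower Q T) (hF : IsLimit T F) {n : ℕ} {a : X}
    (ha : a ∈ (T n).settled) {u : W} (hu : Q (F a) u) : AccPt a (𝓟 (F ⁻¹' {u})) := by
  rw [hT.limit_eq_of_settled hF ha] at hu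
  refine ((hT.isNext n).accPt_settled a ha u hu).mono (principal_mono.2 ?_)
  rintro y ⟨hy, hyu⟩
  exact (hT.limit_eq_of_settled hF hy).trans hyu

theorem mem_closure_settled_fiber (hT : IsTower Q T) (hF : IsLimit T F) (x : X) :
    x ∈ closure {a | (∃ n, a ∈ (T n).settled) ∧ F a = F x} := by
  rcases hT.exists_settled_or_forall_unsettled x with hx | hx
  · exact subset_closure ⟨hx, rfl⟩
  rw [EMetric.mem_closure_iff]
  intro ε hε
  obtain ⟨N, hN⟩ := ENNReal.exists_inv_nat_lt hε.ne'
  obtain ⟨m, hm, hNm⟩ := ((hF x).and_eventually (eventually_ge_atTop (N + 1))).exists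
  obtain ⟨n, rfl⟩ := Nat.exists_eq_add_of_le' (le_of_add_le_right hNm)
  obtain ⟨a, ha, hlabel, hdist⟩ := (hT.isNext n).exists_settled_near x (hx _)
  refine ⟨a, ⟨⟨_, ha⟩, (hT.limit_eq_of_settled hF ha).trans (hlabel.trans hm)⟩, ?_⟩
  calc edist x a = edist a x := edist_comm x a
    _ < (n : ℝ≥0∞)⁻¹ := hdist
    _ ≤ (N : ℝ≥0∞)⁻¹ := by gcongr; exact Nat.le_of_succ_le_succ hNm
    _ < ε := hN

theorem derivedSet_limit_fiber [IsTrans W Q] (hT : IsTower Q T) (hF : IsLimit T F) (u : W) :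
    derivedSet (F ⁻¹' {u}) = F ⁻¹' {v | Q v u} := by
  refine Subset.antisymm (fun x hx => ?_) fun x hx => ?_
  · obtain ⟨y, rfl, hxy⟩ := ((accPt_iff_frequently_nhdsNE.1 hx).and_eventually
      (hT.eventually_limit_rel hF x)).exists
    exact hxy
  · refine (isClosed_derivedSet _).closure_subset_iff.2 ?_ (hT.mem_closure_settled_fiber hF x)
    rintro a ⟨⟨n, ha⟩, hax⟩
    exact hT.accPt_limit_of_settled hF ha (hax ▸ hx)

end IsTower

end Stage_s19

theorem exists_derivedSet_fiber_eq_preimage [MetricSpace X] [PerfectSpace X] [Finite W]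
    (hX : IsTopologicalBasis {s : Set X | IsClopen s}) {Q : W → W → Prop} [IsTrans W Q]
    (hQ : ∀ v, ∃ u, Q v u) (x₀ : X) (w₀ : W) :
    ∃ F : X → W, F x₀ = w₀ ∧ (∀ x ≠ x₀, Q w₀ (F x)) ∧
      ∀ u, derivedSet (F ⁻¹' {u}) = F ⁻¹' {v | Q v u} := by
  obtain ⟨T, hT0, hT⟩ := Stage_s19.exists_isTower hX hQ
    { unsettled := univ
      settled := {x₀}
      label := fun _ => w₀
      isOpen_unsettled := isOpen_univ
      settled_subset := subset_univ _
      compl_settled_mem_nhdsNE := fun x _ =>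
        compl_mem_nhdsNE_of_subsingleton_inter univ_mem
          (subsingleton_singleton.anti inter_subset_left)
      locallyConstantOn_label := fun _ _ => Eventually.of_forall fun _ => rfl } rfl
  obtain ⟨F, hF⟩ := Stage_s19.exists_isLimit T
  refine ⟨F, ?_, fun x hx => ?_, hT.derivedSet_limit_fiber hF⟩
  · rw [hT.limit_eq_of_settled hF (n := 0) (by rw [hT0]; rfl), hT0]
  · have hx1 : x ∈ (T 1).unsettled := by
      rw [← zero_add 1, (hT.isNext 0).unsettled_eq, hT0]
      exact ⟨mem_univ x, hx⟩
    simpa only [hT0] using hT.rel_limit hF hx1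

end Stages

section Frames

theorem infinite_of_mem_derivedSet {X : Type*} [TopologicalSpace X] [T1Space X] {S : Set X}
    {x : X} (hx : x ∈ derivedSet S) : S.Infinite :=
  infinite_iff_frequently_cofinite.2
    ((accPt_iff_frequently_nhdsNE.1 hx).filter_mono (nhdsNE_le_cofinite x))

theorem perfectSpace_of_not_isOpen_singleton {X : Type*} [TopologicalSpace X]
    (h : ∀ x : X, ¬ IsOpen ({x} : Set X)) : PerfectSpace X :=
  perfectSpace_iff_forall_not_isolated.2 fun x =>
    ⟨fun hx => h x ((isOpen_singleton_iff_punctured_nhds x).2 hx)⟩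

theorem isCdPMorphism_of_derivedSet_fiber {X W : Type} [TopologicalSpace X] [T1Space X]
    {R RD : W → W → Prop} {f : X → W} {x₀ : X} {w₀ : W} (hrefl : ∀ w, R w w)
    (hroot : ∀ w, R w₀ w) (hmin : ∀ v, R v w₀ → v = w₀)
    (hRD : ∀ v w, RD v w ↔ ¬ (v = w₀ ∧ w = w₀)) (hx₀ : f x₀ = w₀) (hf₀ : ∀ x ≠ x₀, f x ≠ w₀)
    (hf : ∀ w, derivedSet (f ⁻¹' {w}) = f ⁻¹' {v | R v w ∧ w ≠ w₀}) : IsCdPMorphism R RD f := by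
  have hinf : ∀ w ≠ w₀, (f ⁻¹' {w}).Infinite := fun w hw =>
    infinite_of_mem_derivedSet ((hf w).superset ⟨hx₀ ▸ hroot w, hw⟩)
  have hfib : ∀ x, f x = w₀ ↔ x = x₀ := fun x =>
    ⟨not_imp_not.1 (hf₀ x), fun h => h ▸ hx₀⟩
  refine ⟨fun w => ?_, fun w => ?_, fun w => ?_⟩
  · rcases eq_or_ne w w₀ with rfl | hw
    exacts [⟨x₀, hx₀⟩, (hinf w hw).nonempty]
  · ext x
    rw [closure_eq_self_union_derivedSet, hf]
    refine ⟨?_, fun hx => ?_⟩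
    · rintro (rfl | hx)
      exacts [hrefl (f x), hx.1]
    · by_cases hw : w = w₀
      · exact Or.inl ((hmin _ (hw ▸ hx)).trans hw.symm)
      · exact Or.inr ⟨hx, hw⟩
  · ext x
    simp only [mem_ofPred_eq, mem_preimage, hRD]
    by_cases hw : w = w₀
    · simp only [hw, hfib, and_true, exists_eq_right, ne_comm (a := x₀)]
    · obtain ⟨y, hy, hyx⟩ := (hinf w hw).nontrivial.exists_ne x
      exact iff_of_true ⟨y, hyx, hy⟩ fun h => hw h.2

end Frames

/-- Case II of the main construction: if `X` is a nonempty
zero-dimensional dense-in-itself metric space and `F = (W, R, R_D)` is a finite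
S4D-frame which is a T₁-frame and a DS-frame, rooted at `w₀` (with `W = R(w₀)`)
and with `R_D = W × W − {(w₀, w₀)}`, then there is a cd-p-morphism from `X` onto
`F`. -/
theorem cd_p_morphism_onto_rooted_punctured_frame (X : Type) [MetricSpace X]
    [Nonempty X]
    (hzero : TopologicalSpace.IsTopologicalBasis {s : Set X | IsClopen s})
    (hdii : ∀ x : X, ¬ IsOpen ({x} : Set X))
    {W : Type} [Finite W] (R RD : W → W → Prop) (hF : IsS4DFrame R RD)
    (hT1 : IsT1Frame R RD) (hDS : IsDSFrame R RD)
    (w₀ : W) (hroot : ∀ w : W, R w₀ w)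
    (hRD : ∀ x y : W, RD x y ↔ ¬ (x = w₀ ∧ y = w₀)) :
    ∃ f : X → W, IsCdPMorphism R RD f := by
  have hirr : ¬ RD w₀ w₀ := fun h => (hRD w₀ w₀).1 h ⟨rfl, rfl⟩
  let Q (v u : W) : Prop := R v u ∧ u ≠ w₀
  have : IsTrans W Q := ⟨fun _ _ _ hvu hut => ⟨hF.trans hvu.1 hut.1, hut.2⟩⟩
  have hQ : ∀ v, ∃ u, Q v u := fun v => by
    rcases eq_or_ne v w₀ with rfl | hv
    · obtain ⟨u, hu, hvu⟩ := hDS v hirr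
      exact ⟨u, hvu, hu⟩
    · exact ⟨v, hF.refl v, hv⟩
  have : PerfectSpace X := perfectSpace_of_not_isOpen_singleton hdii
  obtain ⟨x₀⟩ := ‹Nonempty X›
  obtain ⟨f, hx₀, hf₀, hf⟩ := exists_derivedSet_fiber_eq_preimage hzero hQ x₀ w₀
  exact ⟨f, isCdPMorphism_of_derivedSet_fiber hF.refl hroot (hT1 w₀ hirr) hRD hx₀
    (fun x hx => (hf₀ x hx).2) hf⟩
end
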